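/- For every ε > 0 there exists N₁ such that for every N ≥ N₁ and every equidistributing mesh of N elements, the intensity parameter satisfies | √α_h − ‖r‖_{L^{2/3}(Ω)} | ≤ ε; that is, √α_h → ‖r‖_{L^{2/3}(Ω)} as N → ∞ over equidistributing meshes. -/

import Mathlib

/-!
Setting of Huang–He, "Error analysis for equidistributing meshes":
the boundary value problem  −(a u')' + b u' + c u = f on Ω = (0,1), u(0)=u(1)=0,
its linear finite element discretization on a mesh 0 = x₀ < ⋯ < x_N = 1,
and the residual-based equidistribution quantities.
-/

noncomputable section
open MeasureTheory Real

namespace EquidMesh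

/-- L² norm on (0,1). -/
def L2 (g : ℝ → ℝ) : ℝ := Real.sqrt (∫ t in (0:ℝ)..1, (g t)^2)

/-- L¹ norm on (0,1). -/
def L1 (g : ℝ → ℝ) : ℝ := ∫ t in (0:ℝ)..1, |g t|

/-- The L^{2/3} quasi-norm on (0,1): (∫₀¹ |g|^{2/3})^{3/2}. -/
def Lp23 (g : ℝ → ℝ) : ℝ := (∫ t in (0:ℝ)..1, |g t| ^ ((2:ℝ)/3)) ^ ((3:ℝ)/2)

/-- L^∞ norm (essential supremum of |g|) on (0,1). -/
def Linf (g : ℝ → ℝ) : ℝ := essSup (fun t => |g t|) (volume.restrict (Set.Ioo (0:ℝ) 1))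

/-- Membership in L²(0,1). -/
def MemL2 (g : ℝ → ℝ) : Prop :=
  Measurable g ∧ IntervalIntegrable (fun t => (g t)^2) volume 0 1

/-- Membership in L^∞(0,1). -/
def MemLinf (g : ℝ → ℝ) : Prop :=
  Measurable g ∧ ∃ M : ℝ, ∀ᵐ x ∂(volume.restrict (Set.Ioo (0:ℝ) 1)), |g x| ≤ M

/-- `g` is absolutely continuous on [0,1] with derivative `g' ∈ L¹(0,1)`. -/
def HasL1Deriv (g g' : ℝ → ℝ) : Prop :=
  Measurable g' ∧ IntervalIntegrable g' volume 0 1 ∧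
    ∀ x ∈ Set.Icc (0:ℝ) 1, g x = g 0 + ∫ t in (0:ℝ)..x, g' t

/-- A function in H¹(0,1): absolutely continuous on [0,1], carried together with its
(a.e.) derivative, which lies in L²(0,1). -/
structure H1 where
  val : ℝ → ℝ
  dval : ℝ → ℝ
  dval_meas : Measurable dval
  dval_int : IntervalIntegrable dval volume 0 1
  dval_sq_int : IntervalIntegrable (fun t => (dval t)^2) volume 0 1
  ftc : ∀ x ∈ Set.Icc (0:ℝ) 1, val x = val 0 + ∫ t in (0:ℝ)..x, dval t

/-- `u ∈ H²(0,1)`: the derivative `u'` is absolutely continuous with `u'' ∈ L²(0,1)`. -/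
def H1.IsH2 (u : H1) : Prop :=
  ∃ u'' : ℝ → ℝ, Measurable u'' ∧ IntervalIntegrable u'' volume 0 1 ∧
    IntervalIntegrable (fun t => (u'' t)^2) volume 0 1 ∧
    ∀ x ∈ Set.Icc (0:ℝ) 1, u.dval x = u.dval 0 + ∫ t in (0:ℝ)..x, u'' t

/-- The coefficients of the elliptic problem on Ω = (0,1):
`a, b ∈ W^{1,∞}(Ω)`, `c ∈ L^∞(Ω)`, `a ≥ a₀ > 0`, and `c − b'/2 ≥ 0` a.e. -/
structure Coeffs where
  a : ℝ → ℝ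
  b : ℝ → ℝ
  c : ℝ → ℝ
  a' : ℝ → ℝ
  b' : ℝ → ℝ
  a0 : ℝ
  a0_pos : 0 < a0
  a_lb : ∀ x ∈ Set.Icc (0:ℝ) 1, a0 ≤ a x
  a'_meas : Measurable a'
  b'_meas : Measurable b'
  c_meas : Measurable c
  a'_int : IntervalIntegrable a' volume 0 1
  b'_int : IntervalIntegrable b' volume 0 1
  a'_bdd : ∃ M : ℝ, ∀ᵐ x ∂(volume.restrict (Set.Ioo (0:ℝ) 1)), |a' x| ≤ M
  b'_bdd : ∃ M : ℝ, ∀ᵐ x ∂(volume.restrict (Set.Ioo (0:ℝ) 1)), |b' x| ≤ M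
  c_bdd : ∃ M : ℝ, ∀ᵐ x ∂(volume.restrict (Set.Ioo (0:ℝ) 1)), |c x| ≤ M
  ftc_a : ∀ x ∈ Set.Icc (0:ℝ) 1, a x = a 0 + ∫ t in (0:ℝ)..x, a' t
  ftc_b : ∀ x ∈ Set.Icc (0:ℝ) 1, b x = b 0 + ∫ t in (0:ℝ)..x, b' t
  cb_nonneg : ∀ᵐ x ∂(volume.restrict (Set.Ioo (0:ℝ) 1)), 0 ≤ c x - b' x / 2

/-- The bilinear form B(u,v) = ∫₀¹ (a u' v' + b u' v + c u v) dx. -/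
def Coeffs.B (P : Coeffs) (u v : H1) : ℝ :=
  ∫ t in (0:ℝ)..1,
    (P.a t * u.dval t * v.dval t + P.b t * u.dval t * v.val t + P.c t * u.val t * v.val t)

/-- The right-hand side functional (f, v) = ∫₀¹ f v dx. -/
def ip (f : ℝ → ℝ) (v : H1) : ℝ := ∫ t in (0:ℝ)..1, f t * v.val t

/-- `u ∈ H¹₀(Ω)` is the weak solution: B(u,v) = (f,v) for all v ∈ H¹₀(Ω). -/
def Coeffs.IsWeakSolution (P : Coeffs) (f : ℝ → ℝ) (u : H1) : Prop :=
  u.val 0 = 0 ∧ u.val 1 = 0 ∧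
    ∀ v : H1, v.val 0 = 0 → v.val 1 = 0 → P.B u v = ip f v

/-- A mesh of N elements of Ω = (0,1): 0 = x₀ < x₁ < ⋯ < x_N = 1. -/
structure Mesh (N : ℕ) where
  x : ℕ → ℝ
  x_zero : x 0 = 0
  x_last : x N = 1
  x_mono : ∀ i < N, x i < x (i+1)

/-- Element length (the element of index `i` is `(x i, x (i+1))`, `0 ≤ i < N`). -/
def Mesh.h {N : ℕ} (m : Mesh N) (i : ℕ) : ℝ := m.x (i+1) - m.x i

/-- `v` is piecewise linear with respect to the mesh: its derivative is constant
inside each element. -/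
def Mesh.IsPL {N : ℕ} (m : Mesh N) (v : H1) : Prop :=
  ∀ i < N, ∃ s : ℝ, ∀ t ∈ Set.Ioo (m.x i) (m.x (i+1)), v.dval t = s

/-- `uh` is the linear finite element solution on the mesh `m`:
a continuous piecewise linear function vanishing at 0 and 1 with
B(u_h, v_h) = (f, v_h) for all piecewise linear v_h vanishing at 0 and 1. -/
def Coeffs.IsFESolution (P : Coeffs) (f : ℝ → ℝ) {N : ℕ} (m : Mesh N) (uh : H1) : Prop :=
  uh.val 0 = 0 ∧ uh.val 1 = 0 ∧ m.IsPL uh ∧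
    ∀ v : H1, v.val 0 = 0 → v.val 1 = 0 → m.IsPL v → P.B uh v = ip f v

/-- The residual of `w`: r = f + a' w' − b w' − c w. -/
def Coeffs.res (P : Coeffs) (f : ℝ → ℝ) (w : H1) : ℝ → ℝ :=
  fun t => f t + P.a' t * w.dval t - P.b t * w.dval t - P.c t * w.val t

/-- The element L² average ⟨g⟩_i = (h_i⁻¹ ∫_{K_i} g²)^{1/2}. -/
def Mesh.avg {N : ℕ} (m : Mesh N) (g : ℝ → ℝ) (i : ℕ) : ℝ :=
  Real.sqrt ((1 / m.h i) * ∫ t in (m.x i)..(m.x (i+1)), (g t)^2)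

/-- The intensity parameter α_h = (Σ_i h_i ⟨g⟩_i^{2/3})³. -/
def Mesh.alpha {N : ℕ} (m : Mesh N) (g : ℝ → ℝ) : ℝ :=
  (∑ i ∈ Finset.range N, m.h i * (m.avg g i) ^ ((2:ℝ)/3)) ^ 3

/-- The adaptation function value ρ_i = (1 + α_h⁻¹ ⟨g⟩_i²)^{1/3}. -/
def Mesh.rho {N : ℕ} (m : Mesh N) (g : ℝ → ℝ) (i : ℕ) : ℝ :=
  (1 + (m.alpha g)⁻¹ * (m.avg g i)^2) ^ ((1:ℝ)/3)

/-- σ_h = Σ_i ρ_i h_i. -/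
def Mesh.sigma {N : ℕ} (m : Mesh N) (g : ℝ → ℝ) : ℝ :=
  ∑ i ∈ Finset.range N, m.rho g i * m.h i

/-- The mesh equidistributes (the piecewise constant adaptation function built from) `g`:
ρ_i h_i = σ_h / N for all elements. -/
def Mesh.IsEquidistributing {N : ℕ} (m : Mesh N) (g : ℝ → ℝ) : Prop :=
  ∀ i < N, m.rho g i * m.h i = m.sigma g / (N:ℝ)

/-- Membership in the mesh set S_N: 1/(ρ₀ N) ≤ h_i ≤ 2/N for all i. -/
def Mesh.InS {N : ℕ} (m : Mesh N) (ρ0 : ℝ) : Prop :=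
  ∀ i < N, 1 / (ρ0 * (N:ℝ)) ≤ m.h i ∧ m.h i ≤ 2 / (N:ℝ)

/-- The maximum norm distance ‖X − X̃‖_∞ between two meshes with the same N. -/
def meshDist {N : ℕ} (m m' : Mesh N) : ℝ :=
  (Finset.range (N+1)).sup' (Finset.nonempty_range_iff.mpr (Nat.succ_ne_zero N))
    (fun i => |m.x i - m'.x i|)

/-- The energy norm squared ‖v‖_E² = ∫₀¹ (a v'² + (c − b'/2) v²) dx. -/
def Coeffs.energySq (P : Coeffs) (v : H1) : ℝ :=
  ∫ t in (0:ℝ)..1, (P.a t * (v.dval t)^2 + (P.c t - P.b' t / 2) * (v.val t)^2)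

/-- Lebesgue measure on the unit interval. -/
abbrev unitMeasure : Measure ℝ := volume.restrict (Set.Ioc (0:ℝ) 1)

lemma ae_unit_iff {p : ℝ → Prop} :
    (∀ᵐ x ∂(volume.restrict (Set.Ioo (0:ℝ) 1)), p x) ↔ ∀ᵐ x ∂unitMeasure, p x := by
  rw [unitMeasure, Measure.restrict_congr_set Ioo_ae_eq_Ioc]

lemma ae_unit_mem_Icc : ∀ᵐ x ∂unitMeasure, x ∈ Set.Icc (0:ℝ) 1 := by
  filter_upwards [ae_restrict_mem measurableSet_Ioc] with x hx using Set.Ioc_subset_Icc_self hx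

lemma integral_unit (g : ℝ → ℝ) : ∫ t in (0:ℝ)..1, g t = ∫ t, g t ∂unitMeasure :=
  intervalIntegral.integral_of_le zero_le_one

lemma intervalIntegrable_unit {g : ℝ → ℝ} :
    IntervalIntegrable g volume 0 1 ↔ Integrable g unitMeasure :=
  intervalIntegrable_iff_integrableOn_Ioc_of_le zero_le_one

lemma aestronglyMeasurable_unit {g : ℝ → ℝ} (hg : ContinuousOn g (Set.Icc 0 1)) :
    AEStronglyMeasurable g unitMeasure :=
  (hg.mono Set.Ioc_subset_Icc_self).aestronglyMeasurable measurableSet_Ioc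

/-- The primitive representing an absolutely continuous function on the unit interval is
an `AbsolutelyContinuousOnInterval`. -/
lemma HasL1Deriv.absolutelyContinuous {g g' : ℝ → ℝ} (h : HasL1Deriv g g') :
    AbsolutelyContinuousOnInterval (fun x => g 0 + ∫ t in (0:ℝ)..x, g' t) 0 1 := by
  have h1 := h.2.1.absolutelyContinuousOnInterval_intervalIntegral (c := 0) (by simp)
  have h2 : AbsolutelyContinuousOnInterval (fun _ : ℝ => g 0) 0 1 :=
    (LipschitzWith.const (g 0)).lipschitzOnWith.absolutelyContinuousOnInterval
  exact h2.add h1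

lemma HasL1Deriv.continuousOn {g g' : ℝ → ℝ} (h : HasL1Deriv g g') :
    ContinuousOn g (Set.Icc 0 1) := by
  have h1 := h.absolutelyContinuous.continuousOn
  rw [Set.uIcc_of_le zero_le_one] at h1
  exact h1.congr h.2.2

lemma HasL1Deriv.ae_hasDerivAt {g g' : ℝ → ℝ} (h : HasL1Deriv g g') :
    ∀ᵐ x, x ∈ Set.Icc (0:ℝ) 1 →
      HasDerivAt (fun x => g 0 + ∫ t in (0:ℝ)..x, g' t) (g' x) x := by
  filter_upwards [h.2.1.ae_hasDerivAt_integral] with x hx hm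
  rw [Set.uIcc_of_le zero_le_one] at hx
  exact (hx hm 0 (by simp)).const_add (g 0)

lemma H1.hasL1Deriv (v : H1) : HasL1Deriv v.val v.dval :=
  ⟨v.dval_meas, v.dval_int, v.ftc⟩

lemma H1.continuousOn (v : H1) : ContinuousOn v.val (Set.Icc 0 1) :=
  v.hasL1Deriv.continuousOn

lemma H1.memLp_dval (v : H1) : MemLp v.dval 2 unitMeasure :=
  (memLp_two_iff_integrable_sq v.dval_meas.aestronglyMeasurable).2
    (intervalIntegrable_unit.1 v.dval_sq_int)

/-- Pointwise Poincaré inequality for functions vanishing at `0`. -/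
lemma H1.sq_val_le (v : H1) (h0 : v.val 0 = 0) {x : ℝ} (hx : x ∈ Set.Icc (0:ℝ) 1) :
    (v.val x) ^ 2 ≤ ∫ t, (v.dval t) ^ 2 ∂unitMeasure := by
  have hsub : Set.uIcc 0 x ⊆ Set.uIcc (0:ℝ) 1 := by
    rw [Set.uIcc_of_le hx.1, Set.uIcc_of_le zero_le_one]
    exact Set.Icc_subset_Icc_right hx.2
  have hd := v.dval_int.mono_set hsub
  have hd2 := v.dval_sq_int.mono_set hsub
  have hv : v.val x = ∫ t in (0:ℝ)..x, v.dval t := by rw [v.ftc x hx, h0, zero_add]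
  have h1 : 0 ≤ ∫ t in (0:ℝ)..x, (v.dval t - v.val x) ^ 2 :=
    intervalIntegral.integral_nonneg hx.1 fun _ _ => sq_nonneg _
  have h2 : ∫ t in (0:ℝ)..x, (v.dval t - v.val x) ^ 2
      = (∫ t in (0:ℝ)..x, (v.dval t) ^ 2) - 2 * v.val x * v.val x + x * (v.val x) ^ 2 := by
    have he : ∀ t, (v.dval t - v.val x) ^ 2
        = (v.dval t) ^ 2 - 2 * v.val x * v.dval t + (v.val x) ^ 2 := fun t => by ring
    simp_rw [he]
    rw [intervalIntegral.integral_add (hd2.sub (hd.const_mul _)) (by simp),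
      intervalIntegral.integral_sub hd2 (hd.const_mul _), intervalIntegral.integral_const_mul,
      intervalIntegral.integral_const, ← hv]
    simp
  have h3 : ∫ t in (0:ℝ)..x, (v.dval t) ^ 2 ≤ ∫ t in (0:ℝ)..1, (v.dval t) ^ 2 :=
    intervalIntegral.integral_mono_interval le_rfl hx.1 hx.2
      (Filter.Eventually.of_forall fun _ => sq_nonneg _) v.dval_sq_int
  rw [← integral_unit]
  nlinarith [sq_nonneg (v.val x), hx.2]

/-- The difference of two `H1` functions. -/
def H1.sub (u v : H1) : H1 where
  val := fun x => u.val x - v.val x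
  dval := fun x => u.dval x - v.dval x
  dval_meas := u.dval_meas.sub v.dval_meas
  dval_int := u.dval_int.sub v.dval_int
  dval_sq_int := intervalIntegrable_unit.2 (u.memLp_dval.sub v.memLp_dval).integrable_sq
  ftc := fun x hx => by
    have hsub : Set.uIcc 0 x ⊆ Set.uIcc (0:ℝ) 1 := by
      rw [Set.uIcc_of_le hx.1, Set.uIcc_of_le zero_le_one]
      exact Set.Icc_subset_Icc_right hx.2
    rw [intervalIntegral.integral_sub (u.dval_int.mono_set hsub) (v.dval_int.mono_set hsub),
      u.ftc x hx, v.ftc x hx]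
    ring

namespace Coeffs

variable (P : Coeffs)

lemma hasL1Deriv_a : HasL1Deriv P.a P.a' := ⟨P.a'_meas, P.a'_int, P.ftc_a⟩

lemma hasL1Deriv_b : HasL1Deriv P.b P.b' := ⟨P.b'_meas, P.b'_int, P.ftc_b⟩

lemma exists_bound : ∃ M : ℝ, 0 ≤ M ∧ ∀ᵐ x ∂unitMeasure,
    |P.a x| ≤ M ∧ |P.a' x| ≤ M ∧ |P.b x| ≤ M ∧ |P.b' x| ≤ M ∧ |P.c x| ≤ M := by
  obtain ⟨M1, h1⟩ := isCompact_Icc.exists_bound_of_continuousOn P.hasL1Deriv_a.continuousOn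
  obtain ⟨M2, h2⟩ := isCompact_Icc.exists_bound_of_continuousOn P.hasL1Deriv_b.continuousOn
  obtain ⟨M3, h3⟩ := P.a'_bdd
  obtain ⟨M4, h4⟩ := P.b'_bdd
  obtain ⟨M5, h5⟩ := P.c_bdd
  rw [ae_unit_iff] at h3 h4 h5
  refine ⟨|M1| + |M2| + |M3| + |M4| + |M5|, by positivity, ?_⟩
  filter_upwards [h3, h4, h5, ae_unit_mem_Icc] with x h3 h4 h5 hx
  have h1 := h1 x hx
  have h2 := h2 x hx
  rw [Real.norm_eq_abs] at h1 h2
  have := le_abs_self M1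
  have := le_abs_self M2
  have := le_abs_self M3
  have := le_abs_self M4
  have := le_abs_self M5
  have := abs_nonneg M1
  have := abs_nonneg M2
  have := abs_nonneg M3
  have := abs_nonneg M4
  have := abs_nonneg M5
  refine ⟨?_, ?_, ?_, ?_, ?_⟩ <;> linarith

lemma aestronglyMeasurable_a : AEStronglyMeasurable P.a unitMeasure :=
  aestronglyMeasurable_unit P.hasL1Deriv_a.continuousOn

lemma aestronglyMeasurable_b : AEStronglyMeasurable P.b unitMeasure :=
  aestronglyMeasurable_unit P.hasL1Deriv_b.continuousOn

end Coeffs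

lemma H1.memLp_val (v : H1) : MemLp v.val 2 unitMeasure := by
  obtain ⟨C, hC⟩ := isCompact_Icc.exists_bound_of_continuousOn v.continuousOn
  refine MemLp.of_bound (aestronglyMeasurable_unit v.continuousOn) C ?_
  filter_upwards [ae_unit_mem_Icc] with x hx using hC x hx

/-- Bounded measurable multiples of square integrable functions are square integrable. -/
lemma memLp_two_bdd_mul {g q : ℝ → ℝ} {M : ℝ} (hg : AEStronglyMeasurable g unitMeasure)
    (hM : ∀ᵐ x ∂unitMeasure, |g x| ≤ M) (hq : MemLp q 2 unitMeasure) :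
    MemLp (fun x => g x * q x) 2 unitMeasure :=
  hq.mul' (memLp_top_of_bound hg M hM)

namespace Coeffs

variable (P : Coeffs)

lemma integrable_a_mul {p q : ℝ → ℝ} (hp : MemLp p 2 unitMeasure) (hq : MemLp q 2 unitMeasure) :
    Integrable (fun t => P.a t * p t * q t) unitMeasure := by
  obtain ⟨M, -, hM⟩ := P.exists_bound
  exact (memLp_two_bdd_mul P.aestronglyMeasurable_a (hM.mono fun _ h => h.1) hp).integrable_mul hq

lemma integrable_b_mul {p q : ℝ → ℝ} (hp : MemLp p 2 unitMeasure) (hq : MemLp q 2 unitMeasure) :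
    Integrable (fun t => P.b t * p t * q t) unitMeasure := by
  obtain ⟨M, -, hM⟩ := P.exists_bound
  exact (memLp_two_bdd_mul P.aestronglyMeasurable_b
    (hM.mono fun _ h => h.2.2.1) hp).integrable_mul hq

lemma integrable_b'_mul {p q : ℝ → ℝ} (hp : MemLp p 2 unitMeasure) (hq : MemLp q 2 unitMeasure) :
    Integrable (fun t => P.b' t * p t * q t) unitMeasure := by
  obtain ⟨M, -, hM⟩ := P.exists_bound
  exact (memLp_two_bdd_mul P.b'_meas.aestronglyMeasurable
    (hM.mono fun _ h => h.2.2.2.1) hp).integrable_mul hq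

lemma integrable_c_mul {p q : ℝ → ℝ} (hp : MemLp p 2 unitMeasure) (hq : MemLp q 2 unitMeasure) :
    Integrable (fun t => P.c t * p t * q t) unitMeasure := by
  obtain ⟨M, -, hM⟩ := P.exists_bound
  exact (memLp_two_bdd_mul P.c_meas.aestronglyMeasurable
    (hM.mono fun _ h => h.2.2.2.2) hp).integrable_mul hq

lemma integrable_B (u v : H1) : Integrable (fun t =>
    P.a t * u.dval t * v.dval t + P.b t * u.dval t * v.val t + P.c t * u.val t * v.val t)
    unitMeasure :=
  ((P.integrable_a_mul u.memLp_dval v.memLp_dval).add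
    (P.integrable_b_mul u.memLp_dval v.memLp_val)).add
    (P.integrable_c_mul u.memLp_val v.memLp_val)

lemma B_sub_left (u v w : H1) : P.B (u.sub v) w = P.B u w - P.B v w := by
  simp only [B, integral_unit]
  rw [← integral_sub (P.integrable_B u w) (P.integrable_B v w)]
  refine integral_congr_ae (Filter.Eventually.of_forall fun t => ?_)
  simp only [H1.sub]
  ring

lemma B_sub_right (u v w : H1) : P.B w (u.sub v) = P.B w u - P.B w v := by
  simp only [B, integral_unit]
  rw [← integral_sub (P.integrable_B w u) (P.integrable_B w v)]
  refine integral_congr_ae (Filter.Eventually.of_forall fun t => ?_)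
  simp only [H1.sub]
  ring

/-- Integration by parts for the convection term. -/
lemma integral_b_mul_dval_mul_val (v : H1) (h0 : v.val 0 = 0) (h1 : v.val 1 = 0) :
    ∫ t, P.b t * v.dval t * v.val t ∂unitMeasure
      = -(1 / 2) * ∫ t, P.b' t * v.val t * v.val t ∂unitMeasure := by
  set V : ℝ → ℝ := fun x => v.val 0 + ∫ t in (0:ℝ)..x, v.dval t with hV
  set b : ℝ → ℝ := fun x => P.b 0 + ∫ t in (0:ℝ)..x, P.b' t with hb
  have hVa : AbsolutelyContinuousOnInterval V 0 1 := v.hasL1Deriv.absolutelyContinuous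
  have hba : AbsolutelyContinuousOnInterval b 0 1 := P.hasL1Deriv_b.absolutelyContinuous
  have hVv : ∀ x ∈ Set.Icc (0:ℝ) 1, V x = v.val x := fun x hx => (v.ftc x hx).symm
  have hbb : ∀ x ∈ Set.Icc (0:ℝ) 1, b x = P.b x := fun x hx => (P.ftc_b x hx).symm
  have key := (hba.fun_mul (hVa.fun_mul hVa)).integral_deriv_eq_sub
  rw [hVv 0 (by simp), hVv 1 (by simp), h0, h1] at key
  have hcongr : ∫ x in (0:ℝ)..1, deriv (fun x => b x * (V x * V x)) x
      = ∫ x, (P.b' x * v.val x * v.val x + 2 * (P.b x * v.dval x * v.val x)) ∂unitMeasure := by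
    rw [integral_unit]
    refine integral_congr_ae ?_
    filter_upwards [ae_restrict_of_ae v.hasL1Deriv.ae_hasDerivAt,
      ae_restrict_of_ae P.hasL1Deriv_b.ae_hasDerivAt, ae_unit_mem_Icc] with x hx1 hx2 hx
    have hd1 : HasDerivAt V (v.dval x) x := hx1 hx
    have hd2 : HasDerivAt b (P.b' x) x := hx2 hx
    rw [(hd2.fun_mul (hd1.fun_mul hd1)).deriv, hVv x hx, hbb x hx]
    ring
  rw [hcongr, integral_add (P.integrable_b'_mul v.memLp_val v.memLp_val)
    ((P.integrable_b_mul v.memLp_dval v.memLp_val).const_mul 2), integral_const_mul] at key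
  linarith

/-- Coercivity of the bilinear form. -/
lemma coercive (v : H1) (h0 : v.val 0 = 0) (h1 : v.val 1 = 0) :
    P.a0 * ∫ t, (v.dval t) ^ 2 ∂unitMeasure ≤ P.B v v := by
  have hB : P.B v v = ∫ t, (P.a t * v.dval t * v.dval t
      + (P.c t * v.val t * v.val t - 1 / 2 * (P.b' t * v.val t * v.val t))) ∂unitMeasure := by
    have ia := P.integrable_a_mul v.memLp_dval v.memLp_dval
    have ib := P.integrable_b_mul v.memLp_dval v.memLp_val
    have ib' := (P.integrable_b'_mul v.memLp_val v.memLp_val).const_mul (1 / 2)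
    have ic := P.integrable_c_mul v.memLp_val v.memLp_val
    have iab : Integrable (fun t => P.a t * v.dval t * v.dval t + P.b t * v.dval t * v.val t)
        unitMeasure := ia.add ib
    have icb : Integrable (fun t => P.c t * v.val t * v.val t
        - 1 / 2 * (P.b' t * v.val t * v.val t)) unitMeasure := ic.sub ib'
    rw [B, integral_unit, integral_add iab ic, integral_add ia ib,
      integral_add ia icb, integral_sub ic ib', integral_const_mul,
      P.integral_b_mul_dval_mul_val v h0 h1]
    ring
  rw [hB, ← integral_const_mul]
  refine integral_mono_ae (v.memLp_dval.integrable_sq.const_mul _)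
    ((P.integrable_a_mul v.memLp_dval v.memLp_dval).add
      ((P.integrable_c_mul v.memLp_val v.memLp_val).sub
        ((P.integrable_b'_mul v.memLp_val v.memLp_val).const_mul _))) ?_
  filter_upwards [ae_unit_iff.1 P.cb_nonneg, ae_unit_mem_Icc] with x hx hm
  have ha := P.a_lb x hm
  nlinarith [sq_nonneg (v.dval x), mul_nonneg hx (sq_nonneg (v.val x)),
    mul_nonneg (sub_nonneg.2 ha) (sq_nonneg (v.dval x))]

/-- Young-type upper bound for the bilinear form. -/
lemma B_le {M : ℝ}
    (hb : ∀ᵐ x ∂unitMeasure, |P.a x| ≤ M ∧ |P.b x| ≤ M ∧ |P.c x| ≤ M)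
    {s : ℝ} (hs : 0 < s) (e w : H1) (he : e.val 0 = 0) (hw : w.val 0 = 0) :
    P.B e w ≤ 3 * s * (∫ t, (e.dval t) ^ 2 ∂unitMeasure)
      + 3 * (M ^ 2 / (4 * s)) * ∫ t, (w.dval t) ^ 2 ∂unitMeasure := by
  set E := ∫ t, (e.dval t) ^ 2 ∂unitMeasure with hE
  set W := ∫ t, (w.dval t) ^ 2 ∂unitMeasure with hW
  set K := M ^ 2 / (4 * s) with hK
  have hK0 : 0 ≤ K := by positivity
  have young : ∀ g p q : ℝ, |g| ≤ M → g * p * q ≤ s * p ^ 2 + K * q ^ 2 := by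
    intro g p q hg
    have hg2 : g ^ 2 ≤ M ^ 2 := sq_le_sq' (by linarith [abs_le.1 hg]) (abs_le.1 hg).2
    have h1 : s * p ^ 2 + g ^ 2 / (4 * s) * q ^ 2 - g * p * q
        = s * (p - g * q / (2 * s)) ^ 2 := by
      field_simp
      ring
    have h2 : g ^ 2 / (4 * s) * q ^ 2 ≤ K * q ^ 2 := by
      rw [hK]
      gcongr
    nlinarith [mul_nonneg hs.le (sq_nonneg (p - g * q / (2 * s)))]
  have h1 : P.B e w ≤ ∫ t, (2 * s * (e.dval t) ^ 2 + K * (w.dval t) ^ 2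
      + (s * E + 2 * K * W)) ∂unitMeasure := by
    rw [B, integral_unit]
    refine integral_mono_ae (P.integrable_B e w)
      (((e.memLp_dval.integrable_sq.const_mul _).add
        (w.memLp_dval.integrable_sq.const_mul _)).add (integrable_const _)) ?_
    filter_upwards [hb, ae_unit_mem_Icc] with x hx hm
    have y1 := young _ (e.dval x) (w.dval x) hx.1
    have y2 := young _ (e.dval x) (w.val x) hx.2.1
    have y3 := young _ (e.val x) (w.val x) hx.2.2
    have z1 := mul_le_mul_of_nonneg_left (e.sq_val_le he hm) hs.le
    have z2 := mul_le_mul_of_nonneg_left (w.sq_val_le hw hm) hK0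
    simp only [← hE, ← hW] at z1 z2
    linarith
  have hi : Integrable (fun t => 2 * s * (e.dval t) ^ 2 + K * (w.dval t) ^ 2) unitMeasure :=
    (e.memLp_dval.integrable_sq.const_mul _).add (w.memLp_dval.integrable_sq.const_mul _)
  rw [integral_add hi (integrable_const _), integral_add (e.memLp_dval.integrable_sq.const_mul _)
    (w.memLp_dval.integrable_sq.const_mul _), integral_const_mul, integral_const_mul] at h1
  simp only [integral_const, measureReal_restrict_apply_univ, Real.volume_real_Ioc, sub_zero,
    zero_le_one, sup_of_le_left, one_smul] at h1
  linarith

end Coeffs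

namespace Mesh

variable {N : ℕ} (m : Mesh N)

lemma x_le_x {i j : ℕ} (hij : i ≤ j) (hj : j ≤ N) : m.x i ≤ m.x j := by
  induction j, hij using Nat.le_induction with
  | base => exact le_rfl
  | succ j _ ih => exact (ih (by omega)).trans (m.x_mono j (by omega)).le

lemma x_mem_Icc {i : ℕ} (hi : i ≤ N) : m.x i ∈ Set.Icc (0:ℝ) 1 :=
  ⟨m.x_zero ▸ m.x_le_x (Nat.zero_le i) hi, m.x_last ▸ m.x_le_x hi le_rfl⟩

lemma h_pos {i : ℕ} (hi : i < N) : 0 < m.h i := sub_pos.2 (m.x_mono i hi)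

lemma sum_h : ∑ i ∈ Finset.range N, m.h i = 1 := by
  simp only [h, Finset.sum_range_sub, m.x_zero, m.x_last, sub_zero]

lemma intervalIntegrable {g : ℝ → ℝ} (hg : Integrable g unitMeasure) {i : ℕ} (hi : i < N) :
    IntervalIntegrable g volume (m.x i) (m.x (i + 1)) := by
  refine (intervalIntegrable_unit.2 hg).mono_set ?_
  rw [Set.uIcc_of_le (m.x_mono i hi).le, Set.uIcc_of_le zero_le_one]
  exact Set.Icc_subset_Icc (m.x_mem_Icc hi.le).1 (m.x_mem_Icc hi).2

lemma sum_integral {g : ℝ → ℝ} (hg : Integrable g unitMeasure) :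
    ∑ i ∈ Finset.range N, ∫ t in (m.x i)..(m.x (i + 1)), g t = ∫ t, g t ∂unitMeasure := by
  rw [intervalIntegral.sum_integral_adjacent_intervals (a := m.x)
      fun i hi => m.intervalIntegrable hg hi, m.x_zero, m.x_last, integral_unit]

lemma integral_sub_sq {q : ℝ → ℝ} (hq : MemLp q 2 unitMeasure) {i : ℕ} (hi : i < N) (k : ℝ) :
    ∫ t in (m.x i)..(m.x (i + 1)), (q t - k) ^ 2
      = (∫ t in (m.x i)..(m.x (i + 1)), (q t) ^ 2)
        - 2 * k * (∫ t in (m.x i)..(m.x (i + 1)), q t) + m.h i * k ^ 2 := by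
  have h1 := m.intervalIntegrable (hq.integrable one_le_two) hi
  have h2 := m.intervalIntegrable hq.integrable_sq hi
  have he : ∀ t, (q t - k) ^ 2 = (q t) ^ 2 - 2 * k * q t + k ^ 2 := fun t => by ring
  simp_rw [he]
  rw [intervalIntegral.integral_add (h2.sub (h1.const_mul _)) (by simp),
    intervalIntegral.integral_sub h2 (h1.const_mul _), intervalIntegral.integral_const_mul,
    intervalIntegral.integral_const, smul_eq_mul, h]

lemma integral_sub_sq_nonneg (q : ℝ → ℝ) {i : ℕ} (hi : i < N) (k : ℝ) :
    0 ≤ ∫ t in (m.x i)..(m.x (i + 1)), (q t - k) ^ 2 :=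
  intervalIntegral.integral_nonneg (m.x_mono i hi).le fun _ _ => sq_nonneg _

/-- The mean value is the best constant approximation in the mean square sense. -/
lemma integral_sub_mean_sq_le {q : ℝ → ℝ} (hq : MemLp q 2 unitMeasure) {i : ℕ} (hi : i < N)
    (k : ℝ) :
    ∫ t in (m.x i)..(m.x (i + 1)), (q t - (∫ t in (m.x i)..(m.x (i + 1)), q t) / m.h i) ^ 2
      ≤ ∫ t in (m.x i)..(m.x (i + 1)), (q t - k) ^ 2 := by
  have hh := m.h_pos hi
  rw [m.integral_sub_sq hq hi, m.integral_sub_sq hq hi]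
  set I := ∫ t in (m.x i)..(m.x (i + 1)), q t
  have : m.h i * k ^ 2 - 2 * k * I - (m.h i * (I / m.h i) ^ 2 - 2 * (I / m.h i) * I)
      = m.h i * (k - I / m.h i) ^ 2 := by
    field_simp
    ring
  nlinarith [mul_nonneg hh.le (sq_nonneg (k - I / m.h i))]

lemma integrable_sub_sq {q : ℝ → ℝ} (hq : MemLp q 2 unitMeasure) (k : ℝ) :
    Integrable (fun t => (q t - k) ^ 2) unitMeasure :=
  (hq.sub (memLp_const k)).integrable_sq

lemma avg_sq (q : ℝ → ℝ) {i : ℕ} (hi : i < N) :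
    m.avg q i ^ 2 = (1 / m.h i) * ∫ t in (m.x i)..(m.x (i + 1)), (q t) ^ 2 := by
  refine Real.sq_sqrt (mul_nonneg (by have := m.h_pos hi; positivity) ?_)
  exact intervalIntegral.integral_nonneg (m.x_mono i hi).le fun _ _ => sq_nonneg _

lemma avg_nonneg (q : ℝ → ℝ) (i : ℕ) : 0 ≤ m.avg q i := Real.sqrt_nonneg _

lemma abs_avg_sub_le {q : ℝ → ℝ} (hq : MemLp q 2 unitMeasure) {i : ℕ} (hi : i < N) (k : ℝ) :
    abs (m.avg q i - |k|) ≤ m.avg (fun t => q t - k) i := by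
  have hh := m.h_pos hi
  have hA := m.avg_nonneg q i
  have e1 := m.avg_sq q hi
  have e2 := m.avg_sq (fun t => q t - k) hi
  set I := ∫ t in (m.x i)..(m.x (i + 1)), q t with hI
  have e3 := m.integral_sub_sq hq hi k
  have e4 := m.integral_sub_sq hq hi (I / m.h i)
  have e5 := m.integral_sub_sq_nonneg q hi (I / m.h i)
  simp only [← hI] at e3 e4
  have e6 : ∫ t in (m.x i)..(m.x (i + 1)), (q t) ^ 2 = m.h i * m.avg q i ^ 2 := by
    rw [e1]
    field_simp
  rw [e6] at e3 e4
  have hI1 : I = m.h i * (I / m.h i) := by field_simp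
  set μ := I / m.h i
  have hμ : μ ^ 2 ≤ m.avg q i ^ 2 := by
    rw [e4, hI1] at e5
    have : 0 ≤ m.h i * (m.avg q i ^ 2 - μ ^ 2) := by linarith
    linarith [nonneg_of_mul_nonneg_right this hh]
  have hμA : |μ| ≤ m.avg q i := abs_le_of_sq_le_sq hμ hA
  have hd : m.avg (fun t => q t - k) i ^ 2 = m.avg q i ^ 2 - 2 * (k * μ) + k ^ 2 := by
    rw [e2, e3, hI1]
    field_simp
  have hkμ : k * μ ≤ |k| * m.avg q i := by
    calc k * μ ≤ |k * μ| := le_abs_self _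
      _ = |k| * |μ| := abs_mul _ _
      _ ≤ |k| * m.avg q i := by gcongr
  refine abs_le_of_sq_le_sq ?_ (m.avg_nonneg _ i)
  rw [hd]
  nlinarith [sq_abs k]

end Mesh

lemma abs_rpow_two_thirds_sub_le {x y : ℝ} (hx : 0 ≤ x) (hy : 0 ≤ y) :
    |x ^ ((2:ℝ)/3) - y ^ ((2:ℝ)/3)| ≤ |x - y| ^ ((2:ℝ)/3) := by
  wlog hxy : y ≤ x generalizing x y
  · rw [abs_sub_comm, abs_sub_comm x]
    exact this hy hx (le_of_not_ge hxy)
  have h1 := Real.rpow_add_le_add_rpow (sub_nonneg.2 hxy) hy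
    (by norm_num : (0:ℝ) ≤ 2/3) (by norm_num)
  have h2 : y ^ ((2:ℝ)/3) ≤ x ^ ((2:ℝ)/3) := by gcongr
  rw [sub_add_cancel] at h1
  rw [abs_of_nonneg (sub_nonneg.2 h2), abs_of_nonneg (sub_nonneg.2 hxy)]
  linarith

lemma rpow_two_thirds_le {x t : ℝ} (hx : 0 ≤ x) (ht : 0 < t) :
    x ^ ((2:ℝ)/3) ≤ t + x ^ 2 / t ^ 2 := by
  set y := x ^ ((2:ℝ)/3) with hy
  have hy0 : 0 ≤ y := by positivity
  have hyx : y ^ 3 = x ^ 2 := by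
    rw [hy, ← Real.rpow_natCast, ← Real.rpow_mul hx, ← Real.rpow_natCast]
    norm_num
  rcases le_total y t with h | h
  · have : 0 ≤ x ^ 2 / t ^ 2 := by positivity
    linarith
  · have : y ≤ x ^ 2 / t ^ 2 := by
      rw [le_div_iff₀ (by positivity), ← hyx]
      nlinarith [mul_nonneg hy0 (sub_nonneg.2 (pow_le_pow_left₀ ht.le h 2))]
    linarith

lemma integrable_rpow_two_thirds {q : ℝ → ℝ} (hq : MemLp q 2 unitMeasure) :
    Integrable (fun t => |q t| ^ ((2:ℝ)/3)) unitMeasure := by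
  refine ((integrable_const (1:ℝ)).add hq.integrable_sq).mono'
    ((Real.continuous_rpow_const (by norm_num)).comp_aestronglyMeasurable
      (continuous_abs.comp_aestronglyMeasurable hq.aestronglyMeasurable)) ?_
  refine Filter.Eventually.of_forall fun t => ?_
  rw [Real.norm_of_nonneg (by positivity)]
  have := rpow_two_thirds_le (abs_nonneg (q t)) one_pos
  simpa using this

namespace Mesh

variable {N : ℕ} (m : Mesh N)

/-- The sum `∑ hᵢ ⟨q⟩ᵢ^(2/3)` is close to the corresponding sum for a nearby piecewise
constant function. -/
lemma abs_sum_avg_sub_le {q : ℝ → ℝ} (hq : MemLp q 2 unitMeasure) (k : ℕ → ℝ) {t : ℝ}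
    (ht : 0 < t) :
    |(∑ i ∈ Finset.range N, m.h i * m.avg q i ^ ((2:ℝ)/3))
        - ∑ i ∈ Finset.range N, m.h i * |k i| ^ ((2:ℝ)/3)|
      ≤ t + (∑ i ∈ Finset.range N, ∫ s in (m.x i)..(m.x (i + 1)), (q s - k i) ^ 2) / t ^ 2 := by
  rw [← Finset.sum_sub_distrib]
  calc _ ≤ ∑ i ∈ Finset.range N,
        |m.h i * m.avg q i ^ ((2:ℝ)/3) - m.h i * |k i| ^ ((2:ℝ)/3)| :=
        Finset.abs_sum_le_sum_abs _ _
    _ ≤ ∑ i ∈ Finset.range N, (m.h i * t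
        + (∫ s in (m.x i)..(m.x (i + 1)), (q s - k i) ^ 2) / t ^ 2) := by
      refine Finset.sum_le_sum fun i hi => ?_
      have hi := Finset.mem_range.1 hi
      have hh := m.h_pos hi
      have h1 := abs_rpow_two_thirds_sub_le (m.avg_nonneg q i) (abs_nonneg (k i))
      have h2 : abs (m.avg q i - |k i|) ^ ((2:ℝ)/3)
          ≤ m.avg (fun s => q s - k i) i ^ ((2:ℝ)/3) := by
        have := m.abs_avg_sub_le hq hi (k i)
        gcongr
      have h3 := rpow_two_thirds_le (m.avg_nonneg (fun s => q s - k i) i) ht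
      rw [m.avg_sq _ hi] at h3
      rw [← mul_sub, abs_mul, abs_of_pos hh]
      calc _ ≤ m.h i * _ := mul_le_mul_of_nonneg_left (h1.trans (h2.trans h3)) hh.le
        _ = _ := by field_simp
    _ = _ := by
      rw [Finset.sum_add_distrib, ← Finset.sum_mul, m.sum_h, one_mul, Finset.sum_div]

/-- The integral of `|q|^(2/3)` is close to that of a nearby piecewise constant function. -/
lemma abs_integral_sub_le {q : ℝ → ℝ} (hq : MemLp q 2 unitMeasure) (k : ℕ → ℝ) {t : ℝ}
    (ht : 0 < t) :
    |(∫ s, |q s| ^ ((2:ℝ)/3) ∂unitMeasure)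
        - ∑ i ∈ Finset.range N, m.h i * |k i| ^ ((2:ℝ)/3)|
      ≤ t + (∑ i ∈ Finset.range N, ∫ s in (m.x i)..(m.x (i + 1)), (q s - k i) ^ 2) / t ^ 2 := by
  rw [← m.sum_integral (integrable_rpow_two_thirds hq), ← Finset.sum_sub_distrib]
  calc _ ≤ ∑ i ∈ Finset.range N,
        |(∫ s in (m.x i)..(m.x (i + 1)), |q s| ^ ((2:ℝ)/3)) - m.h i * |k i| ^ ((2:ℝ)/3)| :=
        Finset.abs_sum_le_sum_abs _ _
    _ ≤ ∑ i ∈ Finset.range N, (m.h i * t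
        + (∫ s in (m.x i)..(m.x (i + 1)), (q s - k i) ^ 2) / t ^ 2) := by
      refine Finset.sum_le_sum fun i hi => ?_
      have hi := Finset.mem_range.1 hi
      have hx := (m.x_mono i hi).le
      have i1 := m.intervalIntegrable (integrable_rpow_two_thirds hq) hi
      have i2 := m.intervalIntegrable (integrable_sub_sq hq (k i)) hi
      have h1 : m.h i * |k i| ^ ((2:ℝ)/3)
          = ∫ s in (m.x i)..(m.x (i + 1)), |k i| ^ ((2:ℝ)/3) := by
        rw [intervalIntegral.integral_const, smul_eq_mul, h]
      have h2 : m.h i * t + (∫ s in (m.x i)..(m.x (i + 1)), (q s - k i) ^ 2) / t ^ 2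
          = ∫ s in (m.x i)..(m.x (i + 1)), (t + (q s - k i) ^ 2 / t ^ 2) := by
        rw [intervalIntegral.integral_add (by simp) (i2.div_const _),
          intervalIntegral.integral_const, intervalIntegral.integral_div, smul_eq_mul, h]
      rw [h1, h2, ← intervalIntegral.integral_sub i1 (by simp)]
      refine (intervalIntegral.abs_integral_le_integral_abs hx).trans ?_
      refine intervalIntegral.integral_mono_on hx (i1.sub (by simp)).abs
        (IntervalIntegrable.add (by simp) (i2.div_const _)) fun s _ => ?_
      have h3 := abs_rpow_two_thirds_sub_le (abs_nonneg (q s)) (abs_nonneg (k i))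
      have h4 : abs (|q s| - |k i|) ^ ((2:ℝ)/3) ≤ |q s - k i| ^ ((2:ℝ)/3) := by
        have := abs_abs_sub_abs_le_abs_sub (q s) (k i)
        gcongr
      have h5 := rpow_two_thirds_le (abs_nonneg (q s - k i)) ht
      rw [sq_abs] at h5
      exact h3.trans (h4.trans h5)
    _ = _ := by
      rw [Finset.sum_add_distrib, ← Finset.sum_mul, m.sum_h, one_mul, Finset.sum_div]

end Mesh

/-- A square integrable function is approximated by piecewise constant functions, uniformly over
all sufficiently fine meshes. -/
lemma exists_piecewise_const_approx {q : ℝ → ℝ} (hq : MemLp q 2 unitMeasure) {η : ℝ}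
    (hη : 0 < η) :
    ∃ δ > 0, ∀ (N : ℕ) (m : Mesh N), (∀ i < N, m.h i ≤ δ) → ∃ k : ℕ → ℝ,
      ∑ i ∈ Finset.range N, ∫ s in (m.x i)..(m.x (i + 1)), (q s - k i) ^ 2 ≤ η := by
  have hq' : MemLp q (ENNReal.ofReal 2) unitMeasure := by simpa using hq
  obtain ⟨g, hgc, hgi, hgcont, hgm⟩ :=
    hq'.exists_hasCompactSupport_integral_rpow_sub_le two_pos (ε := η / 4) (by positivity)
  have hgm : MemLp g 2 unitMeasure := by simpa using hgm
  have hgi : ∫ x, (q x - g x) ^ 2 ∂unitMeasure ≤ η / 4 := by simpa using hgi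
  have huc := hgc.uniformContinuous_of_continuous hgcont
  obtain ⟨δ, hδ, hu⟩ := Metric.uniformContinuous_iff.1 huc (√(η / 4)) (by positivity)
  refine ⟨δ / 2, by positivity, fun N m hm => ⟨fun i => g (m.x i), ?_⟩⟩
  have hint : Integrable (fun s => (q s - g s) ^ 2) unitMeasure :=
    (hq.sub hgm).integrable_sq
  calc _ ≤ ∑ i ∈ Finset.range N, (2 * (∫ s in (m.x i)..(m.x (i + 1)), (q s - g s) ^ 2)
        + m.h i * (η / 2)) := by
        refine Finset.sum_le_sum fun i hi => ?_
        have hi := Finset.mem_range.1 hi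
        have hx := (m.x_mono i hi).le
        have i1 := m.intervalIntegrable hint hi
        have h1 : 2 * (∫ s in (m.x i)..(m.x (i + 1)), (q s - g s) ^ 2) + m.h i * (η / 2)
            = ∫ s in (m.x i)..(m.x (i + 1)), (2 * (q s - g s) ^ 2 + η / 2) := by
          rw [intervalIntegral.integral_add (i1.const_mul _) (by simp),
            intervalIntegral.integral_const, intervalIntegral.integral_const_mul, smul_eq_mul,
            Mesh.h]
        rw [h1]
        refine intervalIntegral.integral_mono_on hx
          (m.intervalIntegrable (Mesh.integrable_sub_sq hq _) hi)
          ((i1.const_mul _).add (by simp)) fun s hs => ?_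
        have hd : dist s (m.x i) < δ := by
          have := hm i hi
          rw [Mesh.h] at this
          rw [Real.dist_eq, abs_of_nonneg (by linarith [hs.1])]
          linarith [hs.2]
        have hg : |g s - g (m.x i)| ≤ √(η / 4) := (hu hd).le
        have hg2 : (g s - g (m.x i)) ^ 2 ≤ η / 4 := by
          rw [← sq_abs, ← Real.sq_sqrt (by positivity : 0 ≤ η / 4)]
          gcongr
        nlinarith [sq_nonneg ((q s - g s) - (g s - g (m.x i)))]
    _ = 2 * (∫ x, (q x - g x) ^ 2 ∂unitMeasure) + η / 2 := by
        rw [Finset.sum_add_distrib, ← Finset.mul_sum, ← Finset.sum_mul, m.sum_h, one_mul,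
          m.sum_integral hint]
    _ ≤ η := by linarith

namespace Mesh

variable {N : ℕ} (m : Mesh N)

/-- The slope of the nodal interpolant of `u` on the element of index `i`. -/
def slope (u : H1) (i : ℕ) : ℝ := (∫ t in (m.x i)..(m.x (i + 1)), u.dval t) / m.h i

/-- The derivative of the nodal interpolant of `u`. -/
def interpDeriv (u : H1) (t : ℝ) : ℝ :=
  ∑ i ∈ Finset.range N,
    (Set.Ioo (m.x i) (m.x (i + 1))).indicator (fun _ => m.slope u i) t

lemma measurable_interpDeriv (u : H1) : Measurable (m.interpDeriv u) :=
  Finset.measurable_fun_sum _ fun _ _ => measurable_const.indicator measurableSet_Ioo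

lemma memLp_interpDeriv (u : H1) : MemLp (m.interpDeriv u) 2 unitMeasure :=
  memLp_finsetSum _ fun _ _ => (memLp_const _).indicator measurableSet_Ioo

lemma interpDeriv_eq (u : H1) {i : ℕ} (hi : i < N) {t : ℝ}
    (ht : t ∈ Set.Ioo (m.x i) (m.x (i + 1))) : m.interpDeriv u t = m.slope u i := by
  rw [interpDeriv, Finset.sum_eq_single i]
  · exact Set.indicator_of_mem ht _
  · intro j hj hji
    have hj := Finset.mem_range.1 hj
    refine Set.indicator_of_notMem (fun hm => ?_) _
    rcases lt_or_gt_of_ne hji with h | h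
    · exact absurd (m.x_le_x (Nat.succ_le_of_lt h) hi.le) (by linarith [hm.2, ht.1])
    · exact absurd (m.x_le_x (Nat.succ_le_of_lt h) hj.le) (by linarith [hm.1, ht.2])
  · intro h
    exact absurd (Finset.mem_range.2 hi) h

/-- The piecewise linear nodal interpolant of a function vanishing at `0`. -/
def interp (u : H1) : H1 where
  val := fun x => ∫ t in (0:ℝ)..x, m.interpDeriv u t
  dval := m.interpDeriv u
  dval_meas := m.measurable_interpDeriv u
  dval_int := intervalIntegrable_unit.2 ((m.memLp_interpDeriv u).integrable one_le_two)
  dval_sq_int := intervalIntegrable_unit.2 (m.memLp_interpDeriv u).integrable_sq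
  ftc := by simp

lemma isPL_interp (u : H1) : m.IsPL (m.interp u) :=
  fun i hi => ⟨m.slope u i, fun _ ht => m.interpDeriv_eq u hi ht⟩

lemma interp_zero (u : H1) : (m.interp u).val 0 = 0 := by simp [interp]

lemma integral_congr_element {f g : ℝ → ℝ} {i : ℕ} (hi : i < N)
    (h : ∀ t ∈ Set.Ioo (m.x i) (m.x (i + 1)), f t = g t) :
    ∫ t in (m.x i)..(m.x (i + 1)), f t = ∫ t in (m.x i)..(m.x (i + 1)), g t := by
  rw [intervalIntegral.integral_of_le (m.x_mono i hi).le,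
    intervalIntegral.integral_of_le (m.x_mono i hi).le, integral_Ioc_eq_integral_Ioo,
    integral_Ioc_eq_integral_Ioo]
  exact setIntegral_congr_fun measurableSet_Ioo h

lemma interp_one (u : H1) (h0 : u.val 0 = 0) (h1 : u.val 1 = 0) : (m.interp u).val 1 = 0 := by
  have hu : ∫ t, u.dval t ∂unitMeasure = 0 := by
    have := u.ftc 1 (by simp)
    rw [h0, h1, integral_unit] at this
    linarith
  change ∫ t in (0:ℝ)..1, m.interpDeriv u t = 0
  rw [integral_unit, ← m.sum_integral ((m.memLp_interpDeriv u).integrable one_le_two), ← hu,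
    ← m.sum_integral (u.memLp_dval.integrable one_le_two)]
  refine Finset.sum_congr rfl fun i hi => ?_
  have hi := Finset.mem_range.1 hi
  have hh := m.h_pos hi
  rw [m.integral_congr_element hi fun t ht => m.interpDeriv_eq u hi ht,
    intervalIntegral.integral_const, smul_eq_mul, slope, ← h]
  field_simp

/-- The interpolation error is bounded by the error of any piecewise constant approximation of
the derivative. -/
lemma interp_error_le (u : H1) (k : ℕ → ℝ) :
    ∫ t, ((u.sub (m.interp u)).dval t) ^ 2 ∂unitMeasure
      ≤ ∑ i ∈ Finset.range N, ∫ s in (m.x i)..(m.x (i + 1)), (u.dval s - k i) ^ 2 := by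
  rw [← m.sum_integral (u.sub (m.interp u)).memLp_dval.integrable_sq]
  refine Finset.sum_le_sum fun i hi => ?_
  have hi := Finset.mem_range.1 hi
  refine le_trans (le_of_eq ?_) (m.integral_sub_mean_sq_le u.memLp_dval hi (k i))
  refine m.integral_congr_element hi fun t ht => ?_
  change (u.dval t - m.interpDeriv u t) ^ 2 = _
  rw [m.interpDeriv_eq u hi ht, slope]

/-- On an equidistributing mesh every element has length at most `2 / N`. -/
lemma IsEquidistributing.h_le {g : ℝ → ℝ} (hm : m.IsEquidistributing g) {i : ℕ} (hi : i < N) :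
    m.h i ≤ 2 / (N:ℝ) := by
  set S := ∑ i ∈ Finset.range N, m.h i * (m.avg g i) ^ ((2:ℝ)/3) with hS
  have hS0 : 0 ≤ S := Finset.sum_nonneg fun i hi =>
    mul_nonneg (m.h_pos (Finset.mem_range.1 hi)).le (Real.rpow_nonneg (m.avg_nonneg g i) _)
  have hα : m.alpha g = S ^ 3 := rfl
  have hα0 : 0 ≤ (m.alpha g)⁻¹ := by rw [hα]; positivity
  have hρ1 : ∀ i, 1 ≤ m.rho g i := fun i => by
    refine Real.one_le_rpow ?_ (by norm_num)
    have := mul_nonneg hα0 (sq_nonneg (m.avg g i))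
    linarith
  have hρ2 : ∀ i, m.rho g i ≤ 1 + S⁻¹ * m.avg g i ^ ((2:ℝ)/3) := fun i => by
    have h1 := Real.rpow_add_le_add_rpow zero_le_one (mul_nonneg hα0 (sq_nonneg (m.avg g i)))
      (by norm_num : (0:ℝ) ≤ 1/3) (by norm_num)
    refine h1.trans (le_of_eq ?_)
    rw [Real.one_rpow, Real.mul_rpow hα0 (sq_nonneg _), hα, ← inv_pow, ← Real.rpow_natCast,
      ← Real.rpow_natCast, ← Real.rpow_mul (by positivity), ← Real.rpow_mul (m.avg_nonneg g i)]
    norm_num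
  have hσ : m.sigma g ≤ 2 := by
    calc m.sigma g ≤ ∑ i ∈ Finset.range N,
          (m.h i + S⁻¹ * (m.h i * m.avg g i ^ ((2:ℝ)/3))) := by
          refine Finset.sum_le_sum fun i hi => ?_
          have := mul_le_mul_of_nonneg_right (hρ2 i) (m.h_pos (Finset.mem_range.1 hi)).le
          linarith
      _ = 1 + S⁻¹ * S := by rw [Finset.sum_add_distrib, m.sum_h, ← Finset.mul_sum]
      _ ≤ 2 := by linarith [inv_mul_le_one (a := S)]
  calc m.h i ≤ m.rho g i * m.h i := le_mul_of_one_le_left (m.h_pos hi).le (hρ1 i)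
    _ = m.sigma g / N := hm i hi
    _ ≤ 2 / N := by gcongr

end Mesh

namespace Coeffs

variable (P : Coeffs)

/-- Quasi-optimality of the finite element solution. -/
lemma finite_element_error_le {M : ℝ}
    (hb : ∀ᵐ x ∂unitMeasure, |P.a x| ≤ M ∧ |P.b x| ≤ M ∧ |P.c x| ≤ M)
    {f : ℝ → ℝ} {u : H1} (hu : P.IsWeakSolution f u) {N : ℕ} {m : Mesh N} {uh : H1}
    (huh : P.IsFESolution f m uh) {vh : H1} (hv0 : vh.val 0 = 0) (hv1 : vh.val 1 = 0)
    (hv : m.IsPL vh) :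
    ∫ t, ((u.sub uh).dval t) ^ 2 ∂unitMeasure
      ≤ 9 * M ^ 2 / P.a0 ^ 2 * ∫ t, ((u.sub vh).dval t) ^ 2 ∂unitMeasure := by
  obtain ⟨hu0, hu1, hue⟩ := hu
  obtain ⟨h0, h1, hpl, hfe⟩ := huh
  have ha := P.a0_pos
  have hortho : ∀ w : H1, w.val 0 = 0 → w.val 1 = 0 → m.IsPL w → P.B (u.sub uh) w = 0 :=
    fun w w0 w1 hw => by rw [P.B_sub_left, hue w w0 w1, hfe w w0 w1 hw, sub_self]
  have he0 : (u.sub uh).val 0 = 0 := by simp [H1.sub, hu0, h0]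
  have he1 : (u.sub uh).val 1 = 0 := by simp [H1.sub, hu1, h1]
  have hw0 : (u.sub vh).val 0 = 0 := by simp [H1.sub, hu0, hv0]
  have hBB : P.B (u.sub uh) (u.sub uh) = P.B (u.sub uh) (u.sub vh) := by
    rw [P.B_sub_right u uh, P.B_sub_right u vh, hortho uh h0 h1 hpl, hortho vh hv0 hv1 hv]
  have hco := P.coercive (u.sub uh) he0 he1
  have hup := P.B_le hb (s := P.a0 / 6) (by positivity) (u.sub uh) (u.sub vh) he0 hw0
  rw [hBB] at hco
  set E := ∫ t, ((u.sub uh).dval t) ^ 2 ∂unitMeasure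
  set W := ∫ t, ((u.sub vh).dval t) ^ 2 ∂unitMeasure
  have h3 : 3 * (M ^ 2 / (4 * (P.a0 / 6))) * W = P.a0 / 2 * (9 * M ^ 2 / P.a0 ^ 2 * W) := by
    field_simp
    ring
  rw [h3] at hup
  have h4 : P.a0 / 2 * E ≤ P.a0 / 2 * (9 * M ^ 2 / P.a0 ^ 2 * W) := by linarith
  exact le_of_mul_le_mul_left h4 (by positivity)

lemma memLp_res {f : ℝ → ℝ} (hf : MemL2 f) (w : H1) : MemLp (P.res f w) 2 unitMeasure := by
  obtain ⟨M, -, hM⟩ := P.exists_bound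
  have hf2 : MemLp f 2 unitMeasure :=
    (memLp_two_iff_integrable_sq hf.1.aestronglyMeasurable).2 (intervalIntegrable_unit.1 hf.2)
  exact ((hf2.add (memLp_two_bdd_mul P.a'_meas.aestronglyMeasurable
    (hM.mono fun _ h => h.2.1) w.memLp_dval)).sub
    (memLp_two_bdd_mul P.aestronglyMeasurable_b (hM.mono fun _ h => h.2.2.1) w.memLp_dval)).sub
    (memLp_two_bdd_mul P.c_meas.aestronglyMeasurable (hM.mono fun _ h => h.2.2.2.2) w.memLp_val)

/-- The residual depends continuously on the function. -/
lemma res_sub_sq_le {M : ℝ}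
    (hb : ∀ᵐ x ∂unitMeasure, |P.a' x| ≤ M ∧ |P.b x| ≤ M ∧ |P.c x| ≤ M)
    {f : ℝ → ℝ} (hf : MemL2 f) (u w : H1) (h0 : u.val 0 = 0) (hw0 : w.val 0 = 0) :
    ∫ t, (P.res f w t - P.res f u t) ^ 2 ∂unitMeasure
      ≤ 10 * M ^ 2 * ∫ t, ((u.sub w).dval t) ^ 2 ∂unitMeasure := by
  have he0 : (u.sub w).val 0 = 0 := by simp [H1.sub, h0, hw0]
  set E := ∫ t, ((u.sub w).dval t) ^ 2 ∂unitMeasure with hE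
  have hi := (u.sub w).memLp_dval.integrable_sq.const_mul (8 * M ^ 2)
  have h1 : ∫ t, (P.res f w t - P.res f u t) ^ 2 ∂unitMeasure
      ≤ ∫ t, (8 * M ^ 2 * ((u.sub w).dval t) ^ 2 + 2 * M ^ 2 * E) ∂unitMeasure := by
    refine integral_mono_ae ((P.memLp_res hf w).sub (P.memLp_res hf u)).integrable_sq
      (hi.add (integrable_const _)) ?_
    filter_upwards [hb, ae_unit_mem_Icc] with x hx hm
    have hv := (u.sub w).sq_val_le he0 hm
    rw [← hE] at hv
    have hM0 : 0 ≤ M := (abs_nonneg _).trans hx.1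
    have hc : P.c x ^ 2 ≤ M ^ 2 := sq_le_sq' (abs_le.1 hx.2.2).1 (abs_le.1 hx.2.2).2
    have hab : (P.a' x - P.b x) ^ 2 ≤ (2 * M) ^ 2 :=
      sq_le_sq' (by linarith [(abs_le.1 hx.1).1, (abs_le.1 hx.2.1).2])
        (by linarith [(abs_le.1 hx.1).2, (abs_le.1 hx.2.1).1])
    have heq : P.res f w x - P.res f u x
        = P.c x * (u.sub w).val x - (P.a' x - P.b x) * (u.sub w).dval x := by
      simp only [res, H1.sub]
      ring
    have k1 := mul_le_mul_of_nonneg_right hab (sq_nonneg ((u.sub w).dval x))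
    have k2 : P.c x ^ 2 * (u.sub w).val x ^ 2 ≤ M ^ 2 * E :=
      mul_le_mul hc hv (sq_nonneg _) (sq_nonneg _)
    change (P.res f w x - P.res f u x) ^ 2 ≤ _
    rw [heq]
    nlinarith [sq_nonneg (P.c x * (u.sub w).val x + (P.a' x - P.b x) * (u.sub w).dval x)]
  rw [integral_add hi (integrable_const _), integral_const_mul, ← hE] at h1
  simp only [integral_const, measureReal_restrict_apply_univ, Real.volume_real_Ioc, sub_zero,
    zero_le_one, sup_of_le_left, one_smul] at h1
  linarith

end Coeffs

lemma Mesh.sqrt_alpha {N : ℕ} (m : Mesh N) (g : ℝ → ℝ) :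
    √(m.alpha g)
      = (∑ i ∈ Finset.range N, m.h i * (m.avg g i) ^ ((2:ℝ)/3)) ^ ((3:ℝ)/2) := by
  have hS0 : 0 ≤ ∑ i ∈ Finset.range N, m.h i * (m.avg g i) ^ ((2:ℝ)/3) :=
    Finset.sum_nonneg fun i hi =>
      mul_nonneg (m.h_pos (Finset.mem_range.1 hi)).le (Real.rpow_nonneg (m.avg_nonneg g i) _)
  rw [Mesh.alpha, Real.sqrt_eq_rpow, ← Real.rpow_natCast, ← Real.rpow_mul hS0]
  norm_num

/-- If `q` and `r` are close in mean square, then on a mesh resolving `r` the sum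
`∑ hᵢ ⟨q⟩ᵢ^(2/3)` is close to the integral of `|r|^(2/3)`. -/
lemma Mesh.abs_sum_avg_sub_integral_le {N : ℕ} (m : Mesh N) {q r : ℝ → ℝ}
    (hq : MemLp q 2 unitMeasure) (hr : MemLp r 2 unitMeasure) {t : ℝ} (ht : 0 < t) (k : ℕ → ℝ)
    (hk : ∑ i ∈ Finset.range N, ∫ s in (m.x i)..(m.x (i + 1)), (r s - k i) ^ 2 ≤ t ^ 3 / 4)
    (hqr : ∫ s, (q s - r s) ^ 2 ∂unitMeasure ≤ t ^ 3 / 4) :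
    |(∑ i ∈ Finset.range N, m.h i * m.avg q i ^ ((2:ℝ)/3))
        - ∫ s, |r s| ^ ((2:ℝ)/3) ∂unitMeasure| ≤ 4 * t := by
  have hint : Integrable (fun s => (q s - r s) ^ 2) unitMeasure := (hq.sub hr).integrable_sq
  have hqk : ∑ i ∈ Finset.range N, ∫ s in (m.x i)..(m.x (i + 1)), (q s - k i) ^ 2 ≤ t ^ 3 := by
    calc _ ≤ ∑ i ∈ Finset.range N, (2 * (∫ s in (m.x i)..(m.x (i + 1)), (q s - r s) ^ 2)
          + 2 * ∫ s in (m.x i)..(m.x (i + 1)), (r s - k i) ^ 2) := by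
          refine Finset.sum_le_sum fun i hi => ?_
          have hi := Finset.mem_range.1 hi
          have i1 := (m.intervalIntegrable hint hi).const_mul 2
          have i2 := (m.intervalIntegrable (integrable_sub_sq hr (k i)) hi).const_mul 2
          rw [← intervalIntegral.integral_const_mul, ← intervalIntegral.integral_const_mul,
            ← intervalIntegral.integral_add i1 i2]
          refine intervalIntegral.integral_mono_on (m.x_mono i hi).le
            (m.intervalIntegrable (integrable_sub_sq hq _) hi) (i1.add i2) fun s _ => ?_
          nlinarith [sq_nonneg ((q s - r s) - (r s - k i))]
      _ = 2 * (∫ s, (q s - r s) ^ 2 ∂unitMeasure)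
          + 2 * ∑ i ∈ Finset.range N, ∫ s in (m.x i)..(m.x (i + 1)), (r s - k i) ^ 2 := by
          rw [Finset.sum_add_distrib, ← Finset.mul_sum, ← Finset.mul_sum, m.sum_integral hint]
      _ ≤ t ^ 3 := by linarith
  have hdiv : ∀ D : ℝ, D ≤ t ^ 3 → D / t ^ 2 ≤ t := fun D hD => by
    rw [div_le_iff₀ (by positivity)]
    linarith [pow_succ' t 2]
  have ht3 : 0 < t ^ 3 := by positivity
  have b1 := (m.abs_sum_avg_sub_le hq k ht).trans (add_le_add_right (hdiv _ hqk) t)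
  have b2 := (m.abs_integral_sub_le hr k ht).trans
    (add_le_add_right (hdiv _ (by linarith)) t)
  rw [abs_le] at b1 b2 ⊢
  constructor <;> linarith

/-- √α_h → ‖r‖_{L^{2/3}} as N → ∞ over equidistributing meshes. -/
theorem statement2 (P : Coeffs) (f : ℝ → ℝ) (hf : MemL2 f)
    (u : H1) (hu : P.IsWeakSolution f u) :
    ∀ ε : ℝ, 0 < ε → ∃ N₁ : ℕ, ∀ N : ℕ, N₁ ≤ N →
      ∀ (m : Mesh N) (uh : H1), P.IsFESolution f m uh →
        m.IsEquidistributing (P.res f uh) →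
        |Real.sqrt (m.alpha (P.res f uh)) - Lp23 (P.res f u)| ≤ ε := by
  intro ε hε
  have hr := P.memLp_res hf u
  obtain ⟨M, hM0, hM⟩ := P.exists_bound
  have hu0 := hu.1
  have hu1 := hu.2.1
  have hcont : ContinuousAt (fun y : ℝ => y ^ ((3:ℝ)/2))
      (∫ s, |P.res f u s| ^ ((2:ℝ)/3) ∂unitMeasure) :=
    Real.continuousAt_rpow_const _ _ (Or.inr (by norm_num))
  obtain ⟨δ, hδ, hcl⟩ := Metric.continuousAt_iff.1 hcont ε hε
  set t := δ / 8 with ht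
  have ht0 : 0 < t := by positivity
  set C := 10 * M ^ 2 * (9 * M ^ 2 / P.a0 ^ 2) with hC
  have hC0 : 0 ≤ C := by positivity
  obtain ⟨δ₁, hδ₁, happ₁⟩ := exists_piecewise_const_approx hr (η := t ^ 3 / 4) (by positivity)
  obtain ⟨δ₂, hδ₂, happ₂⟩ := exists_piecewise_const_approx u.memLp_dval
    (η := t ^ 3 / 4 / (C + 1)) (by positivity)
  obtain ⟨N₁, hN₁⟩ := exists_nat_gt (2 / min δ₁ δ₂)
  have hmin : 0 < min δ₁ δ₂ := lt_min hδ₁ hδ₂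
  refine ⟨N₁, fun N hN m uh huh heq => ?_⟩
  have hh : ∀ i < N, m.h i ≤ min δ₁ δ₂ := fun i hi => by
    have hNpos : (0:ℝ) < N := by exact_mod_cast Nat.zero_lt_of_lt hi
    have hNN : (N₁:ℝ) ≤ N := by exact_mod_cast hN
    have h1 : 2 / min δ₁ δ₂ ≤ N := hN₁.le.trans hNN
    refine (heq.h_le m hi).trans ?_
    rw [div_le_iff₀ hmin] at h1
    rw [div_le_iff₀ hNpos]
    linarith
  obtain ⟨k₁, hk₁⟩ := happ₁ N m fun i hi => (hh i hi).trans (min_le_left _ _)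
  obtain ⟨k₂, hk₂⟩ := happ₂ N m fun i hi => (hh i hi).trans (min_le_right _ _)
  have hW := (m.interp_error_le u k₂).trans hk₂
  have hE := P.finite_element_error_le
    (hM.mono fun _ h => ⟨h.1, h.2.2.1, h.2.2.2.2⟩) hu huh (m.interp_zero u)
    (m.interp_one u hu0 hu1) (m.isPL_interp u)
  have hR := P.res_sub_sq_le (hM.mono fun _ h => ⟨h.2.1, h.2.2.1, h.2.2.2.2⟩) hf u uh hu0 huh.1
  have hqr : ∫ s, (P.res f uh s - P.res f u s) ^ 2 ∂unitMeasure ≤ t ^ 3 / 4 := by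
    calc _ ≤ 10 * M ^ 2 * (9 * M ^ 2 / P.a0 ^ 2 * (t ^ 3 / 4 / (C + 1))) := by
          refine hR.trans ?_
          gcongr
          refine hE.trans ?_
          gcongr
      _ = C / (C + 1) * (t ^ 3 / 4) := by rw [hC]; ring
      _ ≤ 1 * (t ^ 3 / 4) := by
          gcongr
          rw [div_le_one (by positivity)]
          linarith
      _ = t ^ 3 / 4 := one_mul _
  have hS := m.abs_sum_avg_sub_integral_le (P.memLp_res hf uh) hr ht0 k₁ hk₁ hqr
  rw [m.sqrt_alpha, Lp23, integral_unit, ← Real.dist_eq]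
  refine (hcl ?_).le
  rw [Real.dist_eq]
  refine hS.trans_lt ?_
  rw [ht]
  linarith

end EquidMesh
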